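/- arXiv:2207.07416 — 6 statements merged into one kernel-verified Lean document; each statement's English description precedes it below -/
import Mathlib

section
/- Neither the formula ¬c p →c (q →i ¬c p) nor the formula ¬c p →i (q →i ¬c p) is valid in Kripke semantics: for each of the two formulas there exists a Kripke model and a world of it at which the formula is not satisfied. -/
/-- Formulas of the language L: propositional variables, falsum, conjunction,
disjunction, intuitionistic implication, and classical implication. -/
inductive Formula : Type
  | var : ℕ → Formula
  | bot : Formula
  | conj : Formula → Formula → Formula
  | disj : Formula → Formula → Formula
  | impi : Formula → Formula → Formula
  | impc : Formula → Formula → Formula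
/-- A Kripke model: nonempty set of worlds, a preorder, and a hereditary valuation. -/
structure KripkeModel where
  W : Type
  nonempty : Nonempty W
  R : W → W → Prop
  refl : ∀ w, R w w
  trans : ∀ w v u, R w v → R v u → R w u
  V : ℕ → Set W
  heredity : ∀ p w v, w ∈ V p → R w v → v ∈ V p

/-- Satisfaction relation `w ⊨_M A`. -/
def sat (M : KripkeModel) : M.W → Formula → Prop
  | w, Formula.var p => w ∈ M.V p
  | _, Formula.bot => False
  | w, Formula.conj A B => sat M w A ∧ sat M w B
  | w, Formula.disj A B => sat M w A ∨ sat M w B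
  | w, Formula.impi A B => ∀ v, M.R w v → sat M v A → sat M v B
  | w, Formula.impc A B => sat M w A → sat M w B

/-- A formula is valid if it is satisfied at every world of every Kripke model. -/
def valid (A : Formula) : Prop := ∀ (M : KripkeModel) (w : M.W), sat M w A
/-- Classical negation: ¬c A := A →c ⊥. -/
def negc (A : Formula) : Formula := Formula.impc A Formula.bot

theorem sat_negc {M : KripkeModel} {w : M.W} {A : Formula} :
    sat M w (negc A) ↔ ¬ sat M w A :=
  Iff.rfl

theorem sat_impc_of_sat_impi {M : KripkeModel} {w : M.W} {A B : Formula}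
    (h : sat M w (Formula.impi A B)) : sat M w (Formula.impc A B) :=
  h w (M.refl w)

/-- Classical negation is not hereditary: it is lost as soon as a later world gains `A`, while the
inner intuitionistic implication would carry it to every later world satisfying `B`. -/
theorem not_sat_impc_negc_impi_negc {M : KripkeModel} {w v : M.W} {A B : Formula}
    (hwv : M.R w v) (hwA : ¬ sat M w A) (hvA : sat M v A) (hvB : sat M v B) :
    ¬ sat M w (Formula.impc (negc A) (Formula.impi B (negc A))) := by
  intro h
  have hvnA : sat M v (negc A) := h (sat_negc.mpr hwA) v hwv hvB
  exact sat_negc.mp hvnA hvA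

/-- The Kripke model on the two-element chain `false ≤ true` in which every variable holds exactly
at `true`, used as a countermodel to both formulas. It is reducible so that `false` and `true`
elaborate as worlds. -/
abbrev twoChainModel : KripkeModel where
  W := Bool
  nonempty := inferInstance
  R := (· ≤ ·)
  refl := le_refl
  trans _ _ _ := le_trans
  V _ := Set.Ici true
  heredity _ _ _ hw hwv := le_trans (Set.mem_Ici.mp hw) hwv

theorem sat_twoChainModel_var {w : Bool} {p : ℕ} :
    sat twoChainModel w (Formula.var p) ↔ w = true :=
  top_le_iff (a := w)

/-- Neither ¬c p →c (q →i ¬c p) nor ¬c p →i (q →i ¬c p) is valid: each fails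
at some world of some Kripke model. -/
theorem per_instances_invalid :
    (∃ (M : KripkeModel) (w : M.W),
      ¬ sat M w (Formula.impc (negc (Formula.var 0))
        (Formula.impi (Formula.var 1) (negc (Formula.var 0))))) ∧
    (∃ (M : KripkeModel) (w : M.W),
      ¬ sat M w (Formula.impi (negc (Formula.var 0))
        (Formula.impi (Formula.var 1) (negc (Formula.var 0))))) := by
  have hbot : ¬ sat twoChainModel false (Formula.var 0) :=
    mt sat_twoChainModel_var.mp Bool.false_ne_true
  have htop (p : ℕ) : sat twoChainModel true (Formula.var p) := sat_twoChainModel_var.mpr rfl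
  have hle : twoChainModel.R false true := Bool.false_le true
  have hc := not_sat_impc_negc_impi_negc hle hbot (htop 0) (htop 1)
  exact ⟨⟨twoChainModel, false, hc⟩, ⟨twoChainModel, false, mt sat_impc_of_sat_impi hc⟩⟩
end

section
/- Let A be a classical formula (i.e., A contains no occurrence of →i). Then A is a classical tautology (true under every two-valued Boolean valuation) if and only if A is 3-valid (1 ∈ v̄(A) for every three-valued valuation v). -/
/-- Classical formulas: those containing no occurrence of →i. -/
def isClassical : Formula → Prop
  | Formula.var _ => True
  | Formula.bot => True
  | Formula.conj A B => isClassical A ∧ isClassical B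
  | Formula.disj A B => isClassical A ∧ isClassical B
  | Formula.impi _ _ => False
  | Formula.impc A B => isClassical A ∧ isClassical B

/-- Two-valued Boolean valuation (⊥ false, ∧/∨ Boolean, →c material implication;
the value on →i is irrelevant for classical formulas). -/
def boolVal (b : ℕ → Bool) : Formula → Bool
  | Formula.var p => b p
  | Formula.bot => false
  | Formula.conj A B => boolVal b A && boolVal b B
  | Formula.disj A B => boolVal b A || boolVal b B
  | Formula.impi A B => !boolVal b A || boolVal b B
  | Formula.impc A B => !boolVal b A || boolVal b B

/-- A classical tautology: a classical formula true under every Boolean valuation. -/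
def Tautology (A : Formula) : Prop :=
  isClassical A ∧ ∀ b : ℕ → Bool, boolVal b A = true
/-- A three-valued valuation `v : Prop → {{1},{0,1},{0}}`, presented by the two
predicates `1 ∈ v(p)` and `0 ∈ v(p)`, at least one of which must hold. -/
structure Val3 where
  one : ℕ → Prop
  zero : ℕ → Prop
  nonempty : ∀ p, one p ∨ zero p

/-- The extension v̄ of a three-valued valuation to all formulas: `(tval v A).1`
means `1 ∈ v̄(A)` and `(tval v A).2` means `0 ∈ v̄(A)`. -/
def tval (v : Val3) : Formula → Prop × Prop
  | Formula.var p => (v.one p, v.zero p)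
  | Formula.bot => (False, True)
  | Formula.conj A B => ((tval v A).1 ∧ (tval v B).1, (tval v A).2 ∨ (tval v B).2)
  | Formula.disj A B => ((tval v A).1 ∨ (tval v B).1, (tval v A).2 ∧ (tval v B).2)
  | Formula.impi A B => (¬ (tval v A).1 ∨ (tval v B).1, (tval v A).1 ∧ (tval v B).2)
  | Formula.impc A B => ((tval v A).2 ∨ (tval v B).1, (tval v A).1 ∧ (tval v B).2)

/-- A formula is 3-valid if `1 ∈ v̄(A)` for every three-valued valuation. -/
def valid3 (A : Formula) : Prop := ∀ v : Val3, (tval v A).1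

namespace Val3

/-- The inclusion order on three-valued valuations: `v ≤ w` when `v p ⊆ w p` for every variable
`p`. -/
instance : Preorder Val3 := Preorder.lift fun v => (v.one, v.zero)

/-- The three-valued valuation with values `{1}` and `{0}` that corresponds to a Boolean
valuation. -/
def ofBool (b : ℕ → Bool) : Val3 where
  one p := b p = true
  zero p := b p = false
  nonempty p := (b p).eq_false_or_eq_true

theorem exists_ofBool_le (v : Val3) : ∃ b, ofBool b ≤ v := by
  classical
  exact ⟨fun p => decide (v.one p), fun _ => of_decide_eq_true,
    fun p hp => (v.nonempty p).resolve_left (of_decide_eq_false hp)⟩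

end Val3

theorem tval_ofBool (b : ℕ → Bool) (A : Formula) :
    tval (Val3.ofBool b) A = (boolVal b A = true, boolVal b A = false) := by
  induction A with
  | var p => rfl
  | bot => simp [boolVal, tval]
  | conj A B ihA ihB | disj A B ihA ihB | impi A B ihA ihB | impc A B ihA ihB =>
    simp [boolVal, tval, ihA, ihB, -Bool.and_eq_false_imp, Bool.and_eq_false_iff]

theorem tval_monotone {A : Formula} (hA : isClassical A) : Monotone fun v => tval v A := by
  intro v w hvw
  induction A with
  | var p => exact ⟨hvw.1 p, hvw.2 p⟩
  | bot => exact le_rfl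
  | impi A B => exact hA.elim
  | conj A B ihA ihB =>
    obtain ⟨oneA, zeroA⟩ := ihA hA.1
    obtain ⟨oneB, zeroB⟩ := ihB hA.2
    exact ⟨And.imp oneA oneB, Or.imp zeroA zeroB⟩
  | disj A B ihA ihB =>
    obtain ⟨oneA, zeroA⟩ := ihA hA.1
    obtain ⟨oneB, zeroB⟩ := ihB hA.2
    exact ⟨Or.imp oneA oneB, And.imp zeroA zeroB⟩
  | impc A B ihA ihB =>
    obtain ⟨oneA, zeroA⟩ := ihA hA.1
    obtain ⟨oneB, zeroB⟩ := ihB hA.2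
    exact ⟨Or.imp zeroA oneB, And.imp oneA zeroB⟩

/-- A classical formula is a classical tautology iff it is 3-valid. -/
theorem tautology_iff_valid3 (A : Formula) (hA : isClassical A) :
    (∀ b : ℕ → Bool, boolVal b A = true) ↔ valid3 A := by
  have one_mem_ofBool (b : ℕ → Bool) : (tval (Val3.ofBool b) A).1 ↔ boolVal b A = true := by
    rw [tval_ofBool]
  constructor
  · intro hTaut v
    obtain ⟨b, hbv⟩ := v.exists_ofBool_le
    exact (tval_monotone hA hbv).1 ((one_mem_ofBool b).2 (hTaut b))
  · intro hValid b
    exact (one_mem_ofBool b).1 (hValid (Val3.ofBool b))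
end

section
/- For all formulas A, B, C of L, the formula (A →i (B →c C)) →c ((A →i B) →c (A →i C)) is 3-valid. -/
/-!
`A →i (B →c C)` and `(A →i B) →c (A →i C)` take the same value under every three-valued valuation,
so (CK) has the form `D →c E` with `1 ∈ v̄(E)` whenever `1 ∈ v̄(D)`. Such a formula is 3-valid
because no value is empty: where `1 ∉ v̄(D)`, necessarily `0 ∈ v̄(D)`.
-/

theorem tval_nonempty (v : Val3) (A : Formula) : (tval v A).1 ∨ (tval v A).2 := by
  induction A with
  | var p => exact v.nonempty p
  | bot => exact Or.inr trivial
  | conj A B hA hB | disj A B hA hB | impi A B hA hB | impc A B hA hB =>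
    simp only [tval]
    tauto

theorem tval_impi_impc (v : Val3) (A B C : Formula) :
    tval v (.impi A (.impc B C)) = tval v (.impc (.impi A B) (.impi A C)) := by
  have one_iff : ¬(tval v A).1 ∨ ((tval v B).2 ∨ (tval v C).1) ↔
      ((tval v A).1 ∧ (tval v B).2) ∨ (¬(tval v A).1 ∨ (tval v C).1) := by
    tauto
  have zero_iff : (tval v A).1 ∧ ((tval v B).1 ∧ (tval v C).2) ↔
      (¬(tval v A).1 ∨ (tval v B).1) ∧ ((tval v A).1 ∧ (tval v C).2) := by
    tauto
  exact Prod.ext (propext one_iff) (propext zero_iff)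

theorem valid3_impc_of_imp {A B : Formula} (h : ∀ v, (tval v A).1 → (tval v B).1) :
    valid3 (.impc A B) :=
  fun v ↦ (tval_nonempty v A).symm.imp_right (h v)

/-- The axiom (CK) is 3-valid. -/
theorem ck_valid3 (A B C : Formula) :
    valid3 (Formula.impc (Formula.impi A (Formula.impc B C))
      (Formula.impc (Formula.impi A B) (Formula.impi A C))) := by
  exact valid3_impc_of_imp fun v hD ↦ tval_impi_impc v A B C ▸ hD
end

section
/- Soundness of (C+J)⁻ with respect to the three-valued semantics: every theorem of the Hilbert system (C+J)⁻ is 3-valid. -/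
/-- Uniform substitution, extended homomorphically to all formulas. -/
def subst (σ : ℕ → Formula) : Formula → Formula
  | Formula.var p => σ p
  | Formula.bot => Formula.bot
  | Formula.conj A B => Formula.conj (subst σ A) (subst σ B)
  | Formula.disj A B => Formula.disj (subst σ A) (subst σ B)
  | Formula.impi A B => Formula.impi (subst σ A) (subst σ B)
  | Formula.impc A B => Formula.impc (subst σ A) (subst σ B)
/-- Persistent formulas: ⊥, variables, formulas A →i B, closed under ∧ and ∨. -/
inductive Persistent : Formula → Prop
  | bot : Persistent Formula.bot
  | var (p : ℕ) : Persistent (Formula.var p)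
  | impi (A B : Formula) : Persistent (Formula.impi A B)
  | conj {A B : Formula} : Persistent A → Persistent B → Persistent (Formula.conj A B)
  | disj {A B : Formula} : Persistent A → Persistent B → Persistent (Formula.disj A B)
/-- Theoremhood in the Hilbert system (C+J)⁻: axioms (CL), (CK), (ID), (CMP),
(PER) and rules (MPI), (RCN). -/
inductive Thm : Formula → Prop
  | cl (A : Formula) (σ : ℕ → Formula) : Tautology A → Thm (subst σ A)
  | ck (A B C : Formula) :
      Thm (Formula.impc (Formula.impi A (Formula.impc B C))
        (Formula.impc (Formula.impi A B) (Formula.impi A C)))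
  | id (A : Formula) : Thm (Formula.impi A A)
  | cmp (A B : Formula) : Thm (Formula.impc (Formula.impi A B) (Formula.impc A B))
  | per (A B : Formula) : Persistent A → Thm (Formula.impc A (Formula.impi B A))
  | mpi {A B : Formula} : Thm A → Thm (Formula.impi A B) → Thm B
  | rcn (B : Formula) {A : Formula} : Thm A → Thm (Formula.impi B A)
/-! The classical connectives act pointwise on three-valued truth values: whenever `x ∈ v̄(A)` and
`y ∈ v̄(B)`, the Boolean combination of `x` and `y` belongs to the value of the corresponding
combination of `A` and `B`. As every `v̄(A)` is nonempty, picking `b p ∈ v̄(σ p)` for each variable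
`p` gives a Boolean valuation with `b(A) ∈ v̄(σ A)` for classical `A`, which settles (CL). Pointwise
action fails for `→i`, but `1 ∈ v̄(A →i B)` just says that `1 ∈ v̄(A)` implies `1 ∈ v̄(B)`. -/

namespace Val3

/-- The value `v̄(A) ⊆ {0, 1}` as a set of Booleans, with `true` for `1` and `false` for `0`; it
repackages the pair of propositions `tval v A`. -/
def values (v : Val3) (A : Formula) : Set Bool :=
  {x | match x with
    | true => (tval v A).1
    | false => (tval v A).2}

variable {v : Val3} {A B : Formula} {x y : Bool}

theorem false_mem_values_bot : false ∈ v.values .bot := trivial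

theorem true_mem_values_impi :
    true ∈ v.values (.impi A B) ↔ (true ∈ v.values A → true ∈ v.values B) :=
  imp_iff_not_or.symm

theorem false_mem_values_impi :
    false ∈ v.values (.impi A B) ↔ true ∈ v.values A ∧ false ∈ v.values B :=
  Iff.rfl

theorem true_mem_values_impc :
    true ∈ v.values (.impc A B) ↔ false ∈ v.values A ∨ true ∈ v.values B :=
  Iff.rfl

theorem and_mem_values_conj (hx : x ∈ v.values A) (hy : y ∈ v.values B) :
    (x && y) ∈ v.values (.conj A B) :=
  match x, y with
  | true, true => ⟨hx, hy⟩
  | true, false => Or.inr hy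
  | false, _ => Or.inl hx

theorem or_mem_values_disj (hx : x ∈ v.values A) (hy : y ∈ v.values B) :
    (x || y) ∈ v.values (.disj A B) :=
  match x, y with
  | true, _ => Or.inl hx
  | false, true => Or.inr hy
  | false, false => ⟨hx, hy⟩

theorem not_or_mem_values_impc (hx : x ∈ v.values A) (hy : y ∈ v.values B) :
    (!x || y) ∈ v.values (.impc A B) :=
  match x, y with
  | true, true => Or.inr hy
  | true, false => ⟨hx, hy⟩
  | false, _ => Or.inl hx

theorem values_nonempty (v : Val3) (A : Formula) : (v.values A).Nonempty := by
  induction A with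
  | var p =>
    rcases v.nonempty p with hone | hzero
    · exact ⟨true, hone⟩
    · exact ⟨false, hzero⟩
  | bot => exact ⟨false, false_mem_values_bot⟩
  | conj A B ihA ihB => exact ⟨_, and_mem_values_conj ihA.some_mem ihB.some_mem⟩
  | disj A B ihA ihB => exact ⟨_, or_mem_values_disj ihA.some_mem ihB.some_mem⟩
  | impi A B _ ihB =>
    by_cases hAB : true ∈ v.values A → true ∈ v.values B
    · exact ⟨true, true_mem_values_impi.mpr hAB⟩
    · obtain ⟨hA, hB⟩ := Classical.not_imp.mp hAB
      obtain ⟨_ | _, hy⟩ := ihB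
      · exact ⟨false, false_mem_values_impi.mpr ⟨hA, hy⟩⟩
      · exact absurd hy hB
  | impc A B ihA ihB => exact ⟨_, not_or_mem_values_impc ihA.some_mem ihB.some_mem⟩

theorem false_or_true_mem_values (v : Val3) (A : Formula) :
    false ∈ v.values A ∨ true ∈ v.values A :=
  Bool.exists_bool.mp (v.values_nonempty A)

theorem boolVal_mem_values_subst {b : ℕ → Bool} {σ : ℕ → Formula}
    (hb : ∀ p, b p ∈ v.values (σ p)) (hA : isClassical A) :
    boolVal b A ∈ v.values (subst σ A) := by
  induction A with
  | var p => exact hb p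
  | bot => exact false_mem_values_bot
  | conj A B ihA ihB => exact and_mem_values_conj (ihA hA.1) (ihB hA.2)
  | disj A B ihA ihB => exact or_mem_values_disj (ihA hA.1) (ihB hA.2)
  | impi A B => exact hA.elim
  | impc A B ihA ihB => exact not_or_mem_values_impc (ihA hA.1) (ihB hA.2)

theorem true_mem_values_subst_of_tautology (v : Val3) (σ : ℕ → Formula) (hA : Tautology A) :
    true ∈ v.values (subst σ A) := by
  choose b hb using fun p => v.values_nonempty (σ p)
  exact hA.2 b ▸ boolVal_mem_values_subst hb hA.1

-- The converse fails when `v̄(A) = {0, 1}` and `v̄(B) = {0}`.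
theorem true_mem_values_impc_of_imp (h : true ∈ v.values A → true ∈ v.values B) :
    true ∈ v.values (.impc A B) :=
  true_mem_values_impc.mpr ((v.false_or_true_mem_values A).imp_right h)

theorem true_mem_values_ck (v : Val3) (A B C : Formula) :
    true ∈ v.values
      (.impc (.impi A (.impc B C)) (.impc (.impi A B) (.impi A C))) := by
  simp only [true_mem_values_impc, false_mem_values_impi]
  by_cases hA : true ∈ v.values A
  · rcases v.false_or_true_mem_values (.impc B C) with hBC | hBC
    · exact Or.inl ⟨hA, hBC⟩
    rcases true_mem_values_impc.mp hBC with hB | hC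
    · exact Or.inr (Or.inl ⟨hA, hB⟩)
    · exact Or.inr (Or.inr (true_mem_values_impi.mpr fun _ => hC))
  · exact Or.inr (Or.inr (true_mem_values_impi.mpr fun h => absurd h hA))

theorem true_mem_values_cmp (v : Val3) (A B : Formula) :
    true ∈ v.values (.impc (.impi A B) (.impc A B)) :=
  true_mem_values_impc_of_imp fun hAB =>
    true_mem_values_impc_of_imp (true_mem_values_impi.mp hAB)

theorem true_mem_values_per (v : Val3) (A B : Formula) :
    true ∈ v.values (.impc A (.impi B A)) :=
  true_mem_values_impc_of_imp fun hA => true_mem_values_impi.mpr fun _ => hA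

end Val3

/-- Soundness of (C+J)⁻ with respect to the three-valued semantics. -/
theorem soundness_three_valued (A : Formula) (h : Thm A) : valid3 A := by
  intro v
  change true ∈ v.values A
  induction h with
  | cl A σ hA => exact v.true_mem_values_subst_of_tautology σ hA
  | ck A B C => exact v.true_mem_values_ck A B C
  | id A => exact Val3.true_mem_values_impi.mpr fun hA => hA
  | cmp A B => exact v.true_mem_values_cmp A B
  | per A B _ => exact v.true_mem_values_per A B
  | mpi _ _ ihA ihAB => exact Val3.true_mem_values_impi.mp ihAB ihA
  | rcn B _ ihA => exact Val3.true_mem_values_impi.mpr fun _ => ihA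
end

section
/- The formula (p ∧ (p →c q)) →i q is not a theorem of the Hilbert system (C+J)⁻. -/
/-!
In (C+J)⁻ without (MPI), a formula `A →i B` can only come from (ID), so that `A = B`, or from
(RCN), so that `B` is already derivable: (CK), (CMP) and (PER) have main connective `→c`, and an
instance of (CL) is neither a variable nor an `→i`-formula, since no classical tautology is one.
In both cases (MPI) yields nothing new, so it is admissible. Hence `A →i B` is a theorem only if
`A = B` or `B` is a theorem, and no variable is a theorem.
-/

/-- Theoremhood in (C+J)⁻ without the rule (MPI), which turns out to be admissible. -/
inductive MpiFreeThm : Formula → Prop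
  | cl (A : Formula) (σ : ℕ → Formula) : Tautology A → MpiFreeThm (subst σ A)
  | ck (A B C : Formula) :
      MpiFreeThm (.impc (.impi A (.impc B C)) (.impc (.impi A B) (.impi A C)))
  | id (A : Formula) : MpiFreeThm (.impi A A)
  | cmp (A B : Formula) : MpiFreeThm (.impc (.impi A B) (.impc A B))
  | per (A B : Formula) : Persistent A → MpiFreeThm (.impc A (.impi B A))
  | rcn (B : Formula) {A : Formula} : MpiFreeThm A → MpiFreeThm (.impi B A)

theorem not_tautology_var (p : ℕ) : ¬ Tautology (.var p) := fun h =>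
  Bool.false_ne_true (h.2 fun _ => false)

theorem Tautology.subst_ne_var {A : Formula} (hA : Tautology A) (σ : ℕ → Formula) (p : ℕ) :
    subst σ A ≠ .var p := by
  cases A with
  | var q => exact absurd hA (not_tautology_var q)
  | _ => nofun

theorem Tautology.subst_ne_impi {A : Formula} (hA : Tautology A) (σ : ℕ → Formula)
    (B C : Formula) : subst σ A ≠ .impi B C := by
  cases A with
  | var q => exact absurd hA (not_tautology_var q)
  | impi D E => exact hA.1.elim
  | _ => nofun

namespace MpiFreeThm

variable {A B : Formula}

theorem thm (h : MpiFreeThm A) : Thm A := by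
  induction h with
  | cl A σ hA => exact .cl A σ hA
  | ck A B C => exact .ck A B C
  | id A => exact .id A
  | cmp A B => exact .cmp A B
  | per A B hA => exact .per A B hA
  | rcn B _ ih => exact .rcn B ih

theorem ne_var (h : MpiFreeThm A) (p : ℕ) : A ≠ .var p := by
  cases h with
  | cl A σ hA => exact hA.subst_ne_var σ p
  | _ => nofun

theorem eq_or_of_impi (h : MpiFreeThm (.impi A B)) : A = B ∨ MpiFreeThm B := by
  generalize hF : Formula.impi A B = F at h
  cases h with
  | cl C σ hC => exact absurd hF.symm (hC.subst_ne_impi σ A B)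
  | id C => cases hF; exact .inl rfl
  | rcn C hB => cases hF; exact .inr hB
  | _ => nomatch hF

theorem mpi (hA : MpiFreeThm A) (hAB : MpiFreeThm (.impi A B)) : MpiFreeThm B :=
  hAB.eq_or_of_impi.elim (fun h => h ▸ hA) fun hB => hB

end MpiFreeThm

theorem thm_iff_mpiFreeThm {A : Formula} : Thm A ↔ MpiFreeThm A := by
  refine ⟨fun h => ?_, MpiFreeThm.thm⟩
  induction h with
  | cl A σ hA => exact .cl A σ hA
  | ck A B C => exact .ck A B C
  | id A => exact .id A
  | cmp A B => exact .cmp A B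
  | per A B hA => exact .per A B hA
  | mpi _ _ ihA ihAB => exact ihA.mpi ihAB
  | rcn B _ ih => exact .rcn B ih

theorem not_thm_var (p : ℕ) : ¬ Thm (.var p) := fun h =>
  (thm_iff_mpiFreeThm.mp h).ne_var p rfl

theorem thm_impi_iff {A B : Formula} : Thm (.impi A B) ↔ A = B ∨ Thm B := by
  constructor
  · intro h
    exact (thm_iff_mpiFreeThm.mp h).eq_or_of_impi.imp_right MpiFreeThm.thm
  · rintro (rfl | hB)
    · exact .id A
    · exact .rcn A hB

theorem ppq_not_theorem_general {A : Formula} {p : ℕ} (hA : A ≠ .var p) :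
    ¬ Thm (.impi A (.var p)) := fun h =>
  (thm_impi_iff.mp h).elim hA (not_thm_var p)

/-- (p ∧ (p →c q)) →i q is not a theorem of (C+J)⁻. -/
theorem ppq_not_theorem :
    ¬ Thm (Formula.impi
      (Formula.conj (Formula.var 0) (Formula.impc (Formula.var 0) (Formula.var 1)))
      (Formula.var 1)) :=
  ppq_not_theorem_general nofun
end

section
/- Semantic incompleteness of (C+J)⁻: there exists a formula C of L such that C is valid in Kripke semantics (satisfied at every world of every Kripke model) but C is not a theorem of the Hilbert system (C+J)⁻. -/
/-!
The only modus ponens of (C+J)⁻ is the one for `→i`, and it is redundant: a theorem `A →i B` comes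
from (ID), so that `A = B`, or from (RCN), so that `B` is already a theorem. Without it no rule
produces a conjunction, so every conjunction that is a theorem is an instance of a tautology
`S ∧ T`, and each conjunct is then an instance of the tautology `S` or `T`. A formula `A →i B` is
never such an instance. Thus theorems are not closed under conjunction: `⊥ →i ⊥` is a theorem, but
its conjunction with itself is not.
-/

/-- Instances of classical tautologies, that is, the formulas supplied by the schema (CL). -/
def IsTautologyInstance (A : Formula) : Prop :=
  ∃ (T : Formula) (σ : ℕ → Formula), Tautology T ∧ subst σ T = A

/-- Theoremhood in (C+J)⁻ without the rule (MPI), for proving that rule redundant. -/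
inductive MPIFreeThm : Formula → Prop
  | cl {A : Formula} : IsTautologyInstance A → MPIFreeThm A
  | ck (A B C : Formula) :
      MPIFreeThm (.impc (.impi A (.impc B C)) (.impc (.impi A B) (.impi A C)))
  | id (A : Formula) : MPIFreeThm (.impi A A)
  | cmp (A B : Formula) : MPIFreeThm (.impc (.impi A B) (.impc A B))
  | per (A B : Formula) : Persistent A → MPIFreeThm (.impc A (.impi B A))
  | rcn (B : Formula) {A : Formula} : MPIFreeThm A → MPIFreeThm (.impi B A)

theorem Tautology.of_conj {S T : Formula} (h : Tautology (.conj S T)) :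
    Tautology S ∧ Tautology T := by
  obtain ⟨⟨hS, hT⟩, hval⟩ := h
  have hval' (b : ℕ → Bool) : boolVal b S = true ∧ boolVal b T = true :=
    Bool.and_eq_true_iff.mp (hval b)
  exact ⟨⟨hS, fun b => (hval' b).1⟩, ⟨hT, fun b => (hval' b).2⟩⟩

theorem not_isTautologyInstance_impi (A B : Formula) : ¬ IsTautologyInstance (.impi A B) := by
  rintro ⟨T, σ, hT, hσ⟩
  cases T with
  | var p => exact not_tautology_var p hT
  | impi _ _ => exact hT.1
  | _ => cases hσ

theorem IsTautologyInstance.of_conj {A B : Formula} (h : IsTautologyInstance (.conj A B)) :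
    IsTautologyInstance A ∧ IsTautologyInstance B := by
  obtain ⟨T, σ, hT, hσ⟩ := h
  cases T with
  | var p => exact (not_tautology_var p hT).elim
  | conj S T =>
    obtain ⟨hA, hB⟩ := Formula.conj.inj hσ
    exact ⟨⟨S, σ, hT.of_conj.1, hA⟩, ⟨T, σ, hT.of_conj.2, hB⟩⟩
  | _ => cases hσ

namespace MPIFreeThm

theorem eq_or_of_impi {A B : Formula} (h : MPIFreeThm (.impi A B)) : A = B ∨ MPIFreeThm B := by
  cases h with
  | cl h => exact (not_isTautologyInstance_impi A B h).elim
  | id => exact .inl rfl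
  | rcn _ hB => exact .inr hB

theorem mpi {A B : Formula} (hA : MPIFreeThm A) (hAB : MPIFreeThm (.impi A B)) :
    MPIFreeThm B :=
  hAB.eq_or_of_impi.elim (fun hEq => hEq ▸ hA) fun hB => hB

end MPIFreeThm

theorem Thm.mpiFreeThm {A : Formula} (h : Thm A) : MPIFreeThm A := by
  induction h with
  | cl T σ hT => exact .cl ⟨T, σ, hT, rfl⟩
  | ck A B C => exact .ck A B C
  | id A => exact .id A
  | cmp A B => exact .cmp A B
  | per A B hA => exact .per A B hA
  | mpi _ _ hA hAB => exact hA.mpi hAB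
  | rcn B _ hA => exact .rcn B hA

theorem Thm.isTautologyInstance_of_conj {A B : Formula} (h : Thm (.conj A B)) :
    IsTautologyInstance (.conj A B) := by
  cases h.mpiFreeThm with
  | cl hInst => exact hInst

theorem not_thm_conj_impi (A B C : Formula) : ¬ Thm (.conj (.impi A B) C) :=
  fun h => not_isTautologyInstance_impi A B h.isTautologyInstance_of_conj.of_conj.1

theorem valid_impi_self (A : Formula) : valid (.impi A A) :=
  fun _ _ _ _ hA => hA

theorem valid.conj {A B : Formula} (hA : valid A) (hB : valid B) : valid (.conj A B) :=
  fun M w => ⟨hA M w, hB M w⟩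

/-- Semantic incompleteness of (C+J)⁻: some formula is valid in Kripke
semantics but not a theorem of (C+J)⁻. -/
theorem cj_minus_incomplete : ∃ C : Formula, valid C ∧ ¬ Thm C := by
  have hvalid : valid (.impi .bot .bot) := valid_impi_self .bot
  exact ⟨.conj (.impi .bot .bot) (.impi .bot .bot), hvalid.conj hvalid, not_thm_conj_impi _ _ _⟩
end
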